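/- Let k be a field of prime characteristic p, let n ≥ 1, and let g be an n × n matrix over k with (g − 1)^p = 0. Then the map φ_g : k → Matrix n n k defined by φ_g(s) = E(s • L(g)) satisfies φ_g(s + t) = φ_g(s) * φ_g(t) for all s, t ∈ k, φ_g(0) = 1, each φ_g(s) is invertible, and φ_g(1) = g. In particular every p-unipotent element of GL_n(k) lies in the image of a one-parameter additive subgroup (saturation for GL_n, Proposition 4.1 of the paper specialized to GL_n). -/

import Mathlib

/-!
Every matrix in sight is a polynomial in the nilpotent matrix `g - 1`, so the claim reduces to
congruences between polynomials in `k[X]` modulo `X ^ p`.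

* `E(sX) E(tX) ≡ E((s+t)X)` modulo `X ^ p` by the binomial theorem (`truncExp_X_mul`). Since
  `L(g)` is a multiple of `g - 1`, its `p`-th power vanishes, and additivity follows by
  evaluating at `L(g)`. Invertibility is additivity at `s` and `-s`.
* `P = E(L(1 + X))` satisfies `P ≡ 1 + X` modulo `X ^ p` (`truncExp_truncLog_X`). Indeed
  `(1 + X) P' ≡ P` modulo `X ^ (p-1)`, as formally `P = exp (log (1 + X))`. This differential
  equation is the recursion `(n+1) a_{n+1} = (1-n) a_n` on the coefficients for `n < p - 1`, where
  `n + 1` is invertible in `k`; the polynomial `1 + X` has the same constant coefficient and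
  satisfies the same recursion. Evaluating at `g - 1` gives `E(L(g)) = g`.
-/

/-- The truncated exponential `E(x) = ∑_{i=0}^{p-1} (1/i!) x^i`. -/
noncomputable def truncExp (k : Type*) [Field k] {A : Type*} [Ring A] [Algebra k A]
    (p : ℕ) (x : A) : A :=
  ∑ i ∈ Finset.range p, ((Nat.factorial i : k))⁻¹ • x ^ i


/-- The truncated logarithm `L(u) = ∑_{i=1}^{p-1} ((-1)^{i+1}/i) (u-1)^i`. -/
noncomputable def truncLog (k : Type*) [Field k] {A : Type*} [Ring A] [Algebra k A]
    (p : ℕ) (u : A) : A :=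
  ∑ i ∈ Finset.Icc 1 (p - 1), (((-1 : k) ^ (i + 1)) / (i : k)) • (u - 1) ^ i

open Polynomial

section

variable {k : Type*} [Field k]

lemma map_truncExp {A B : Type*} [Ring A] [Algebra k A] [Ring B] [Algebra k B]
    (f : A →ₐ[k] B) (p : ℕ) (x : A) : f (truncExp k p x) = truncExp k p (f x) := by
  simp [truncExp, map_sum]

lemma map_truncLog {A B : Type*} [Ring A] [Algebra k A] [Ring B] [Algebra k B]
    (f : A →ₐ[k] B) (p : ℕ) (x : A) : f (truncLog k p x) = truncLog k p (f x) := by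
  simp [truncLog, map_sum]

lemma truncExp_zero {A : Type*} [Ring A] [Algebra k A] {p : ℕ} (hp : p ≠ 0) :
    truncExp k p (0 : A) = 1 := by
  obtain ⟨m, rfl⟩ := Nat.exists_eq_succ_of_ne_zero hp
  simp [truncExp, Finset.sum_range_succ']

lemma coeff_truncExp_C_mul_X (p : ℕ) (s : k) {d : ℕ} (hd : d < p) :
    (truncExp k p (s • (X : k[X]))).coeff d = (Nat.factorial d : k)⁻¹ * s ^ d := by
  simp [truncExp, _root_.smul_pow, finsetSum_coeff, coeff_X_pow, hd]

lemma truncLog_succ {A : Type*} [Ring A] [Algebra k A] (m : ℕ) (u : A) :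
    truncLog k (m + 1 + 1) u = truncLog k (m + 1) u
      + (((-1 : k) ^ (m + 1 + 1)) / ((m + 1 : ℕ) : k)) • (u - 1) ^ (m + 1) := by
  simp [truncLog, Finset.sum_Icc_succ_top]

lemma X_dvd_truncLog (p : ℕ) : X ∣ truncLog k p (1 + X : k[X]) := by
  refine Finset.dvd_sum fun i hi => ?_
  rw [Finset.mem_Icc] at hi
  rw [add_sub_cancel_left, smul_eq_C_mul]
  exact (dvd_pow_self _ (by omega)).mul_left _

variable (p : ℕ) [CharP k p]

lemma natCast_ne_zero_of_lt {m : ℕ} (h0 : m ≠ 0) (h : m < p) : (m : k) ≠ 0 := by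
  rw [Ne, CharP.cast_eq_zero_iff k p]
  exact fun hd => absurd (Nat.le_of_dvd (Nat.pos_of_ne_zero h0) hd) (by omega)

/-- A formal solution of `(1 + X) Q' = Q` modulo `X ^ (p-1)` with `Q(0) = 0` vanishes modulo
`X ^ p`. -/
lemma X_pow_dvd_of_ode {Q : k[X]} (h0 : Q.coeff 0 = 0)
    (h : X ^ (p - 1) ∣ (1 + X) * derivative Q - Q) : X ^ p ∣ Q := by
  rw [X_pow_dvd_iff] at h ⊢
  intro d hd
  induction d with
  | zero => exact h0
  | succ d ih =>
    have hc := h d (by omega)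
    have ihd := ih (by omega)
    have hd0 : ((d : k) + 1) ≠ 0 := by
      exact_mod_cast natCast_ne_zero_of_lt (k := k) p (m := d + 1) (by omega) hd
    rw [coeff_sub, ihd, add_mul, one_mul, coeff_add, coeff_derivative] at hc
    have hX : (X * derivative Q).coeff d = 0 := by
      cases d with
      | zero => simp
      | succ e => rw [coeff_X_mul, coeff_derivative, ihd, zero_mul]
    rw [hX, add_zero, sub_zero] at hc
    exact (mul_eq_zero.mp hc).resolve_right hd0

/-- `(1 + X) L'(1 + X)` is a finite geometric sum times `1 + X`, hence telescopes. -/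
lemma derivative_truncLog {m : ℕ} (hm : m < p) :
    (1 + X) * derivative (truncLog k (m + 1) (1 + X : k[X])) = 1 - (-X) ^ m := by
  induction m with
  | zero => simp [truncLog]
  | succ m ih =>
    have hm0 : ((m : k) + 1) ≠ 0 := by
      exact_mod_cast natCast_ne_zero_of_lt (k := k) p (m := m + 1) (by omega) hm
    have hc : C ((-1 : k) ^ (m + 1 + 1) / ((m + 1 : ℕ) : k)) * C ((m : k) + 1)
        = (-1) ^ m := by
      rw [← C_mul, Nat.cast_succ, div_mul_cancel₀ _ hm0]
      simp [pow_succ]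
    rw [truncLog_succ, derivative_add, mul_add, ih (by omega), derivative_smul,
      add_sub_cancel_left, derivative_X_pow, smul_eq_C_mul, Nat.add_sub_cancel]
    push_cast at hc ⊢
    rw [neg_pow (X : k[X]) m, neg_pow (X : k[X]) (m + 1)]
    linear_combination (1 + X) * X ^ m * hc

variable [Fact p.Prime]

lemma factorial_ne_zero_of_lt {m : ℕ} (h : m < p) : (Nat.factorial m : k) ≠ 0 := by
  rw [Ne, CharP.cast_eq_zero_iff k p, (Fact.out : p.Prime).dvd_factorial]
  omega

/-- The functional equation of the exponential modulo `X ^ p`. -/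
lemma truncExp_X_mul (s t : k) :
    (X : k[X]) ^ p ∣ truncExp k p ((s + t) • (X : k[X]))
      - truncExp k p (s • (X : k[X])) * truncExp k p (t • (X : k[X])) := by
  rw [X_pow_dvd_iff]
  intro d hd
  rw [coeff_sub, sub_eq_zero, coeff_mul, coeff_truncExp_C_mul_X p _ hd,
    (Commute.all s t).add_pow', Finset.mul_sum]
  refine Finset.sum_congr rfl fun ij hij => ?_
  obtain ⟨i, j⟩ := ij
  rw [Finset.HasAntidiagonal.mem_antidiagonal] at hij
  simp only at hij ⊢
  subst hij
  have hi := factorial_ne_zero_of_lt (k := k) p (m := i) (by omega)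
  have hj := factorial_ne_zero_of_lt (k := k) p (m := j) (by omega)
  have hd' := factorial_ne_zero_of_lt (k := k) p hd
  rw [coeff_truncExp_C_mul_X p _ (by omega), coeff_truncExp_C_mul_X p _ (by omega), nsmul_eq_mul]
  have h : ((i + j).choose i : k) * (i.factorial : k) * (j.factorial : k)
      = ((i + j).factorial : k) := by
    have := Nat.choose_mul_factorial_mul_factorial (Nat.le_add_right i j)
    rw [Nat.add_sub_cancel_left] at this
    exact_mod_cast congrArg (Nat.cast : ℕ → k) this
  field_simp
  rw [← h]
  ring

lemma truncExp_add_smul {A : Type*} [Ring A] [Algebra k A] {x : A} (hx : x ^ p = 0) (s t : k) :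
    truncExp k p ((s + t) • x) = truncExp k p (s • x) * truncExp k p (t • x) := by
  obtain ⟨q, hq⟩ := truncExp_X_mul p s t
  have := congrArg (aeval x) hq
  simpa only [map_sub, map_mul, map_truncExp, map_smul, map_pow, aeval_X, hx, zero_mul,
    sub_eq_zero] using this


lemma derivative_truncExp (f : k[X]) {m : ℕ} (hm : m < p) :
    derivative (truncExp k (m + 1) f) = truncExp k m f * derivative f := by
  induction m with
  | zero => simp [truncExp]
  | succ m ih =>
    have h1 : truncExp k (m + 1 + 1) f = truncExp k (m + 1) f
        + ((m + 1).factorial : k)⁻¹ • f ^ (m + 1) := Finset.sum_range_succ _ _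
    have h2 : truncExp k (m + 1) f = truncExp k m f + (m.factorial : k)⁻¹ • f ^ m :=
      Finset.sum_range_succ _ _
    have hm0 : ((m : k) + 1) ≠ 0 := by
      exact_mod_cast natCast_ne_zero_of_lt (k := k) p (m := m + 1) (by omega) hm
    have hf := factorial_ne_zero_of_lt (k := k) p (m := m) (by omega)
    have hc : C (((m + 1).factorial : k)⁻¹) * C ((m : k) + 1) = C ((m.factorial : k)⁻¹) := by
      rw [← C_mul, Nat.factorial_succ]
      congr 1
      push_cast
      field_simp
    rw [h1, derivative_add, ih (by omega), h2, derivative_smul, derivative_pow]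
    simp only [smul_eq_C_mul, Nat.add_sub_cancel, ← hc]
    push_cast
    ring

/-- `exp (log (1 + X)) = 1 + X` modulo `X ^ p`. -/
lemma truncExp_truncLog_X :
    (X : k[X]) ^ p ∣ truncExp k p (truncLog k p (1 + X : k[X])) - (1 + X) := by
  obtain ⟨m, hm⟩ := Nat.exists_eq_succ_of_ne_zero (Fact.out : p.Prime).ne_zero
  have hmp : m < p := by omega
  set l : k[X] := truncLog k p (1 + X) with hl
  have hXl : X ∣ l := X_dvd_truncLog p
  apply X_pow_dvd_of_ode
  · have hl0 : aeval (0 : k) l = 0 := by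
      obtain ⟨q, hq⟩ := hXl
      simp [hq]
    have : aeval (0 : k) (truncExp k p l - (1 + X)) = 0 := by
      rw [map_sub, map_truncExp, hl0, truncExp_zero (Fact.out : p.Prime).ne_zero]
      simp
    rwa [coeff_zero_eq_aeval_zero]
  · have hE := derivative_truncExp p l hmp
    have hL := derivative_truncLog (k := k) p hmp
    have hs : truncExp k (m + 1) l = truncExp k m l + (m.factorial : k)⁻¹ • l ^ m :=
      Finset.sum_range_succ _ _
    have hp1 : p = m + 1 := hm
    have hl' : truncLog k (m + 1) (1 + X) = l := by rw [hl, hp1]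
    rw [hl'] at hL
    have key : (1 + X) * derivative (truncExp k p l - (1 + X)) - (truncExp k p l - (1 + X))
        = X ^ m * (-(-1) ^ m * truncExp k m l) + l ^ m * (-C (m.factorial : k)⁻¹) := by
      have hd : derivative (1 + X : k[X]) = 1 := by simp
      rw [derivative_sub, hd, hp1, hE, hs, smul_eq_C_mul]
      rw [neg_pow] at hL
      linear_combination truncExp k m l * hL
    rw [key, show p - 1 = m by omega]
    exact dvd_add (Dvd.intro _ rfl) ((pow_dvd_pow_of_dvd hXl m).mul_right _)

end

/-- Saturation for `GL_n`: every `p`-unipotent matrix `g` lies in the image of the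
one-parameter additive subgroup `s ↦ E(s • L(g))`. -/
theorem saturation_GL {k : Type*} [Field k] (p : ℕ) [Fact p.Prime] [CharP k p]
    (n : ℕ) (hn : 1 ≤ n) (g : Matrix (Fin n) (Fin n) k) (hg : (g - 1) ^ p = 0) :
    (∀ s t : k, truncExp k p ((s + t) • truncLog k p g)
        = truncExp k p (s • truncLog k p g) * truncExp k p (t • truncLog k p g)) ∧
    truncExp k p ((0 : k) • truncLog k p g) = 1 ∧
    (∀ s : k, IsUnit (truncExp k p (s • truncLog k p g))) ∧
    truncExp k p ((1 : k) • truncLog k p g) = g := by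
  have hp : p ≠ 0 := (Fact.out : p.Prime).ne_zero
  have hg1 : aeval (g - 1) (1 + X : k[X]) = g := by simp
  have hL : truncLog k p g ^ p = 0 := by
    have hd : (X : k[X]) ^ p ∣ truncLog k p (1 + X : k[X]) ^ p :=
      pow_dvd_pow_of_dvd (X_dvd_truncLog p) p
    obtain ⟨q, hq⟩ := hd
    have := congrArg (aeval (g - 1)) hq
    rwa [map_pow, map_truncLog, hg1, map_mul, map_pow, aeval_X, hg, zero_mul] at this
  have hadd := truncExp_add_smul (k := k) p hL
  have hzero : truncExp k p ((0 : k) • truncLog k p g) = 1 := by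
    rw [zero_smul, truncExp_zero hp]
  refine ⟨hadd, hzero, fun s => ?_, ?_⟩
  · refine IsUnit.of_mul_eq_one (truncExp k p ((-s) • truncLog k p g)) ?_
    rw [← hadd, add_neg_cancel, hzero]
  · obtain ⟨q, hq⟩ := truncExp_truncLog_X (k := k) p
    have := congrArg (aeval (g - 1)) hq
    rw [map_sub, map_truncExp, map_truncLog, hg1, map_mul, map_pow, aeval_X, hg, zero_mul,
      sub_eq_zero] at this
    rwa [one_smul]
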